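/- Let 0 < m < M, S = √(M² + (M−m)²), α_0 = 2/(m+S), α_1 = 2/(2M+m−S), and R_2 = (S−M)/(2m+S−M). For every dimension d, every function f : ℝ^d → ℝ that is m-strongly convex and differentiable with M-Lipschitz gradient, with minimizer x*, every initial point x_0, and every natural number n, the gradient descent iterates with the cyclic schedule (α_0, α_1, α_0, α_1, …), i.e. x_{t+1} = x_t − α_{t mod 2} ∇f(x_t), satisfy ‖x_{2n} − x*‖ ≤ R_2^n ‖x_0 − x*‖. -/

import Mathlib

/-!
Strong convexity bounds `f` from below by a quadratic expansion at `y`, and the Lipschitz gradient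
bounds it from above by one at `x`. Their difference is a nonnegative quadratic, so its
discriminant is nonpositive, which is the co-coercivity inequality `0 ≤ Q(x, y)`.
As `(M, M - m, S)` is a Pythagorean triple, the half-angle substitution
`(M, M - m, S) = u (1 - r², 2r, 1 + r²)` removes the square root. The stepsizes become
`1 / (u (1 - r))` and `1 / (u (1 + r) (1 - 2r))`, the rate becomes `r² / (1 - 2r)`, and
`rate² ‖x₀ - x*‖² - ‖x₂ - x*‖²` is a combination of co-coercivities among `x*, x₀, x₁` with
coefficients that are nonnegative for `r < 1 / 2`, and `0 ≤ m` forces `r ≤ √2 - 1`.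
-/

open Set

section NormedSpace

variable {E F : Type*} [NormedAddCommGroup E] [NormedSpace ℝ E] [NormedAddCommGroup F]
  [NormedSpace ℝ F]

theorem norm_sub_sub_fderiv_le_of_lipschitz {f : E → F} (hf : Differentiable ℝ f) {K : ℝ} {x : E}
    (hK : ∀ y, ‖fderiv ℝ f y - fderiv ℝ f x‖ ≤ K * ‖y - x‖) (y : E) :
    ‖f y - f x - fderiv ℝ f x (y - x)‖ ≤ K / 2 * ‖y - x‖ ^ 2 := by
  let l : ℝ → E := AffineMap.lineMap x y
  have hl (t : ℝ) : l t - x = t • (y - x) := by simp [l, AffineMap.lineMap_apply]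
  let φ : ℝ → F := fun t ↦ f (l t) - f x - t • fderiv ℝ f x (y - x)
  have hφ (t : ℝ) : HasDerivAt φ ((fderiv ℝ f (l t) - fderiv ℝ f x) (y - x)) t := by
    have hfl := (hf (l t)).hasFDerivAt.comp_hasDerivAt t AffineMap.hasDerivAt_lineMap
    exact ((hfl.sub_const (f x)).sub ((hasDerivAt_id t).smul_const _)).congr_deriv (by simp)
  have hB (t : ℝ) :
      HasDerivAt (fun t ↦ K / 2 * ‖y - x‖ ^ 2 * t ^ 2) (K * t * ‖y - x‖ ^ 2) t :=
    ((hasDerivAt_pow 2 t).const_mul _).congr_deriv (by push_cast; ring)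
  have hbound : ∀ t ∈ Ico (0 : ℝ) 1,
      ‖(fderiv ℝ f (l t) - fderiv ℝ f x) (y - x)‖ ≤ K * t * ‖y - x‖ ^ 2 := fun t ht ↦
    calc ‖(fderiv ℝ f (l t) - fderiv ℝ f x) (y - x)‖
        ≤ K * ‖l t - x‖ * ‖y - x‖ := ContinuousLinearMap.le_of_opNorm_le _ (hK _) _
      _ = K * t * ‖y - x‖ ^ 2 := by
        rw [hl, norm_smul, Real.norm_of_nonneg ht.1]
        ring
  simpa [φ, l] using image_norm_le_of_norm_deriv_right_le_deriv_boundary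
    (fun t _ ↦ (hφ t).continuousAt.continuousWithinAt) (fun t _ ↦ (hφ t).hasDerivWithinAt)
    (by simp [φ, l]) hB hbound (right_mem_Icc.2 zero_le_one)

theorem add_fderiv_sub_le_of_convexOn {s : Set E} {f : E → ℝ} {f' : E →L[ℝ] ℝ} {x y : E}
    (hf : ConvexOn ℝ s f) (hx : x ∈ s) (hy : y ∈ s) (hf' : HasFDerivAt f f' x) :
    f x + f' (y - x) ≤ f y := by
  have hline : HasDerivAt (f ∘ AffineMap.lineMap x y) (f' (y - x)) (0 : ℝ) :=
    HasFDerivAt.comp_hasDerivAt 0 (by simpa using hf') AffineMap.hasDerivAt_lineMap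
  have hslope := (hf.comp_affineMap (AffineMap.lineMap x y)).le_slope_of_hasDerivAt
    (by simpa using hx) (by simpa using hy) zero_lt_one hline
  simp only [slope_def_field, Function.comp_apply, AffineMap.lineMap_apply_zero,
    AffineMap.lineMap_apply_one, sub_zero, div_one] at hslope
  linarith

end NormedSpace

section InnerProductSpace

variable {E : Type*} [NormedAddCommGroup E] [InnerProductSpace ℝ E]

theorem add_fderiv_sub_add_le_of_strongConvexOn {s : Set E} {m : ℝ} {f : E → ℝ} {f' : E →L[ℝ] ℝ}
    {x y : E} (hf : StrongConvexOn s m f) (hx : x ∈ s) (hy : y ∈ s) (hf' : HasFDerivAt f f' x) :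
    f x + f' (y - x) + m / 2 * ‖y - x‖ ^ 2 ≤ f y := by
  have hsub := hf'.sub ((hasStrictFDerivAt_norm_sq x).hasFDerivAt.const_mul (m / 2))
  have hconv := add_fderiv_sub_le_of_convexOn (strongConvexOn_iff_convex.1 hf) hx hy hsub
  simp only [sub_apply, smul_apply, coe_innerSL_apply, inner_sub_right,
    real_inner_self_eq_norm_sq, smul_eq_mul, nsmul_eq_mul, Nat.cast_ofNat] at hconv
  rw [norm_sub_sq_real, real_inner_comm]
  linarith

theorem norm_sq_le_of_forall_add_inner_add_nonneg {A L : ℝ} {w : E} (hL : 0 ≤ L)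
    (h : ∀ d, 0 ≤ A + inner ℝ w d + L / 2 * ‖d‖ ^ 2) : ‖w‖ ^ 2 ≤ 2 * L * A := by
  have hA : 0 ≤ A := by simpa using h 0
  have hdiscrim : discrim (L / 2 * ‖w‖ ^ 2) (‖w‖ ^ 2) A ≤ 0 := discrim_le_zero fun t ↦ by
    have ht := h (t • w)
    rw [inner_smul_right, real_inner_self_eq_norm_sq, norm_smul, mul_pow, Real.norm_eq_abs,
      sq_abs] at ht
    linarith
  rcases (sq_nonneg ‖w‖).eq_or_lt with hw | hw
  · rw [← hw]
    positivity
  · refine le_of_mul_le_mul_left ?_ hw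
    rw [discrim] at hdiscrim
    linarith

variable [CompleteSpace E]

theorem le_add_inner_gradient_add_of_lipschitz {f : E → ℝ} (hf : Differentiable ℝ f) {M : ℝ} {x : E}
    (hM : ∀ y, ‖gradient f y - gradient f x‖ ≤ M * ‖y - x‖) (y : E) :
    f y ≤ f x + inner ℝ (gradient f x) (y - x) + M / 2 * ‖y - x‖ ^ 2 := by
  have hfderiv (y : E) : ‖fderiv ℝ f y - fderiv ℝ f x‖ ≤ M * ‖y - x‖ := by
    simpa only [← toDual_gradient, ← map_sub, LinearIsometryEquiv.norm_map] using hM y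
  have habs := norm_sub_sub_fderiv_le_of_lipschitz hf hfderiv y
  rw [← inner_gradient_left] at habs
  linarith [(abs_le.1 habs).2]

theorem gradient_eq_zero_of_isLocalMin {f : E → ℝ} {x : E} (h : IsLocalMin f x) :
    gradient f x = 0 := by
  rw [gradient, h.fderiv_eq_zero, map_zero]

/-- The co-coercivity `Q(x, y)` of performance estimation: the slack in the interpolation inequality
for `m`-strongly convex functions with `M`-Lipschitz gradient, multiplied by `2 * (M - m)` so that
`m = M` is covered. -/
noncomputable def cocoercivity (m M : ℝ) (f : E → ℝ) (x y : E) : ℝ :=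
  2 * (M - m) * (f x - f y) + 2 * inner ℝ (M • gradient f y - m • gradient f x) (y - x)
    - ‖gradient f x - gradient f y‖ ^ 2 - m * M * ‖x - y‖ ^ 2

theorem cocoercivity_nonneg {m M : ℝ} (hmM : m ≤ M) {f : E → ℝ} (hconv : StrongConvexOn univ m f)
    (hf : Differentiable ℝ f) (hM : ∀ x y, ‖gradient f x - gradient f y‖ ≤ M * ‖x - y‖) (x y : E) :
    0 ≤ cocoercivity m M f x y := by
  let A := f x - f y - inner ℝ (gradient f y) (x - y) - m / 2 * ‖x - y‖ ^ 2
  let w := gradient f x - gradient f y - m • (x - y)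
  have hquad (d : E) : 0 ≤ A + inner ℝ w d + (M - m) / 2 * ‖d‖ ^ 2 := by
    have hlower := add_fderiv_sub_add_le_of_strongConvexOn hconv (mem_univ y) (mem_univ (x + d))
      (hf y).hasFDerivAt
    have hupper := le_add_inner_gradient_add_of_lipschitz hf (hM · x) (x + d)
    rw [← inner_gradient_left, add_sub_right_comm, inner_add_right, norm_add_sq_real] at hlower
    rw [add_sub_cancel_left] at hupper
    simp only [A, w, inner_sub_left (𝕜 := ℝ), real_inner_smul_left] at hlower ⊢
    linarith
  have hw := norm_sq_le_of_forall_add_inner_add_nonneg (sub_nonneg.2 hmM) hquad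
  rw [← sub_nonneg] at hw
  refine hw.trans_eq ?_
  simp only [A, w, cocoercivity, norm_sub_sq_real, norm_smul, mul_pow, Real.norm_eq_abs, sq_abs,
    inner_sub_left, inner_sub_right, real_inner_smul_left, real_inner_smul_right]
  ring

theorem two_step_certificate {f : E → ℝ} {r u : ℝ} {c x₀ x₁ x₂ : E} (hc : gradient f c = 0)
    (hx₀ : gradient f x₀ = (u * (1 - r)) • (x₀ - x₁))
    (hx₁ : gradient f x₁ = (u * ((1 + r) * (1 - 2 * r))) • (x₁ - x₂)) :
    let Q := cocoercivity ((1 - 2 * r - r ^ 2) * u) ((1 - r ^ 2) * u) f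
    2 * (1 - r) * ((1 + r) * u) ^ 2 *
        ((r ^ 2 * ‖x₀ - c‖) ^ 2 - ((1 - 2 * r) * ‖x₂ - c‖) ^ 2) =
      2 * r ^ 3 * Q c x₀ + (1 - r - r ^ 2 - r ^ 3) * Q c x₁ + (1 - r) ^ 2 * (1 + r) * Q x₁ c +
        r ^ 2 * (1 + r) * Q x₀ x₁ + r ^ 2 * (1 - r) * Q x₁ x₀ := by
  simp only [cocoercivity, hc, hx₀, hx₁]
  simp only [mul_pow, ← real_inner_self_eq_norm_sq, inner_sub_left, inner_sub_right,
    real_inner_smul_left, real_inner_smul_right, inner_zero_left, inner_zero_right, smul_zero,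
    real_inner_comm c, real_inner_comm x₀ x₁, real_inner_comm x₀ x₂, real_inner_comm x₁ x₂]
  ring

theorem norm_sub_le_of_two_steps {f : E → ℝ} {r u : ℝ} (hr : 0 ≤ r) (hr_half : r < 1 / 2)
    (hu : 0 < u) (hconv : StrongConvexOn univ ((1 - 2 * r - r ^ 2) * u) f)
    (hf : Differentiable ℝ f)
    (hM : ∀ x y, ‖gradient f x - gradient f y‖ ≤ (1 - r ^ 2) * u * ‖x - y‖)
    {c x₀ x₁ x₂ : E} (hc : gradient f c = 0)
    (hx₀ : gradient f x₀ = (u * (1 - r)) • (x₀ - x₁))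
    (hx₁ : gradient f x₁ = (u * ((1 + r) * (1 - 2 * r))) • (x₁ - x₂)) :
    ‖x₂ - c‖ ≤ r ^ 2 / (1 - 2 * r) * ‖x₀ - c‖ := by
  have hQ := cocoercivity_nonneg (by nlinarith) hconv hf hM
  have h_one_sub : 0 < 1 - r := by linarith
  have h_one_sub_two : 0 < 1 - 2 * r := by linarith
  have h_weight : 0 ≤ 1 - r - r ^ 2 - r ^ 3 := by
    have : r ^ 2 ≤ (1 / 2) ^ 2 := by gcongr
    have : r ^ 3 ≤ (1 / 2) ^ 3 := by gcongr
    linarith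
  have h_sq : 0 ≤ 2 * (1 - r) * ((1 + r) * u) ^ 2 *
      ((r ^ 2 * ‖x₀ - c‖) ^ 2 - ((1 - 2 * r) * ‖x₂ - c‖) ^ 2) := by
    rw [two_step_certificate hc hx₀ hx₁]
    have := hQ c x₀
    have := hQ c x₁
    have := hQ x₁ c
    have := hQ x₀ x₁
    have := hQ x₁ x₀
    positivity
  have h_le : (1 - 2 * r) * ‖x₂ - c‖ ≤ r ^ 2 * ‖x₀ - c‖ :=
    le_of_sq_le_sq (sub_nonneg.1 (nonneg_of_mul_nonneg_right h_sq (by positivity))) (by positivity)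
  rwa [div_mul_eq_mul_div, le_div_iff₀ h_one_sub_two, mul_comm]

theorem exists_half_angle_parameters {m M : ℝ} (hm : 0 ≤ m) (hmM : m ≤ M) (hM : 0 < M) :
    ∃ r u : ℝ, 0 ≤ r ∧ r < 1 / 2 ∧ 0 < u ∧ m = (1 - 2 * r - r ^ 2) * u ∧ M = (1 - r ^ 2) * u ∧
      √(M ^ 2 + (M - m) ^ 2) = (1 + r ^ 2) * u := by
  set S := √(M ^ 2 + (M - m) ^ 2)
  have hS_sq : S ^ 2 = M ^ 2 + (M - m) ^ 2 := Real.sq_sqrt (by positivity)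
  have hMS : M ≤ S := Real.le_sqrt_of_sq_le (by linarith [sq_nonneg (M - m)])
  have hSM : 0 < S + M := by linarith
  have hr_half : 2 * (M - m) < S + M := by
    by_contra! h
    nlinarith
  refine ⟨(M - m) / (S + M), (S + M) / 2, div_nonneg (sub_nonneg.2 hmM) hSM.le, ?_,
    half_pos hSM, ?_, ?_, ?_⟩
  · rw [div_lt_iff₀ hSM]
    linarith
  all_goals
    field_simp
    linarith

theorem norm_sub_le_of_optimal_two_steps {f : E → ℝ} {m M S : ℝ} (hm : 0 ≤ m) (hmM : m ≤ M)
    (hM : 0 < M) (hS : S = √(M ^ 2 + (M - m) ^ 2)) (hconv : StrongConvexOn univ m f)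
    (hf : Differentiable ℝ f) (hLip : ∀ x y, ‖gradient f x - gradient f y‖ ≤ M * ‖x - y‖)
    {c x₀ x₁ x₂ : E} (hc : gradient f c = 0) (hx₁ : x₁ = x₀ - (2 / (m + S)) • gradient f x₀)
    (hx₂ : x₂ = x₁ - (2 / (2 * M + m - S)) • gradient f x₁) :
    ‖x₂ - c‖ ≤ (S - M) / (2 * m + S - M) * ‖x₀ - c‖ := by
  obtain ⟨r, u, hr, hr_half, hu, rfl, rfl, hSru⟩ := exists_half_angle_parameters hm hmM hM
  obtain rfl := hS.trans hSru
  have hα₀ : 0 < u * (1 - r) := mul_pos hu (by linarith)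
  have hα₁ : 0 < u * ((1 + r) * (1 - 2 * r)) :=
    mul_pos hu (mul_pos (by linarith) (by linarith))
  have hstep {a : ℝ} (ha : 0 < a) (x : E) :
      gradient f x = a • (x - (x - (2 / (2 * a)) • gradient f x)) := by
    rw [sub_sub_cancel, smul_smul, show a * (2 / (2 * a)) = 1 by field_simp, one_smul]
  have hrate : ((1 + r ^ 2) * u - (1 - r ^ 2) * u) /
      (2 * ((1 - 2 * r - r ^ 2) * u) + (1 + r ^ 2) * u - (1 - r ^ 2) * u) =
        r ^ 2 / (1 - 2 * r) := by
    rw [← mul_div_mul_left (r ^ 2) (1 - 2 * r) (mul_pos two_pos hu).ne']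
    congr 1 <;> ring
  rw [hrate]
  refine norm_sub_le_of_two_steps hr hr_half hu hconv hf hLip hc (x₁ := x₁) ?_ ?_
  · convert hstep hα₀ x₀ using 2
    rw [hx₁]
    ring_nf
  · convert hstep hα₁ x₁ using 2
    rw [hx₂]
    ring_nf

theorem cyclic_two_step_schedule_rate_general {m M : ℝ} (hm : 0 ≤ m) (hmM : m ≤ M) (hM : 0 < M)
    {S : ℝ} (hS : S = √(M ^ 2 + (M - m) ^ 2)) {α : ℕ → ℝ} (hα₀ : α 0 = 2 / (m + S))
    (hα₁ : α 1 = 2 / (2 * M + m - S)) {R₂ : ℝ} (hR₂ : R₂ = (S - M) / (2 * m + S - M))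
    {f : E → ℝ} (hconv : StrongConvexOn univ m f) (hf : Differentiable ℝ f)
    (hLip : ∀ x y, ‖gradient f x - gradient f y‖ ≤ M * ‖x - y‖) {xstar : E}
    (hstar : gradient f xstar = 0) {x : ℕ → E}
    (hx : ∀ t, x (t + 1) = x t - α (t % 2) • gradient f (x t)) (n : ℕ) :
    ‖x (2 * n) - xstar‖ ≤ R₂ ^ n * ‖x 0 - xstar‖ := by
  have hMS : M ≤ S := hS ▸ Real.le_sqrt_of_sq_le (by linarith [sq_nonneg (M - m)])
  have hR₂_nonneg : 0 ≤ R₂ := hR₂ ▸ div_nonneg (by linarith) (by linarith)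
  refine le_geom (u := fun n ↦ ‖x (2 * n) - xstar‖) hR₂_nonneg n fun k _ ↦ ?_
  have h_even := hx (2 * k)
  have h_odd := hx (2 * k + 1)
  rw [Nat.mul_mod_right, hα₀] at h_even
  rw [Nat.mul_add_mod, Nat.one_mod, hα₁] at h_odd
  exact hR₂ ▸ norm_sub_le_of_optimal_two_steps hm hmM hM hS hconv hf hLip hstar h_even h_odd

end InnerProductSpace

/-- **Cyclically repeating the optimal two-step schedule** `(α₀, α₁, α₀, α₁, …)` makes
gradient descent on any `m`-strongly convex `M`-smooth function satisfy
`‖x_{2n} − x*‖ ≤ R₂ⁿ ‖x₀ − x*‖`, where `S = √(M² + (M−m)²)`, `α₀ = 2/(m+S)`,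
`α₁ = 2/(2M+m−S)`, and `R₂ = (S−M)/(2m+S−M)`. -/
theorem cyclic_two_step_schedule_rate (m M : ℝ) (hm : 0 < m) (hmM : m < M)
    (S : ℝ) (hS : S = Real.sqrt (M ^ 2 + (M - m) ^ 2))
    (α : ℕ → ℝ)
    (hα₀ : α 0 = 2 / (m + S)) (hα₁ : α 1 = 2 / (2 * M + m - S))
    (R₂ : ℝ) (hR₂ : R₂ = (S - M) / (2 * m + S - M)) :
    ∀ (d : ℕ) (f : EuclideanSpace ℝ (Fin d) → ℝ),
      ConvexOn ℝ Set.univ (fun x => f x - m / 2 * ‖x‖ ^ 2) →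
      Differentiable ℝ f →
      (∀ x y : EuclideanSpace ℝ (Fin d), ‖gradient f x - gradient f y‖ ≤ M * ‖x - y‖) →
      ∀ xstar : EuclideanSpace ℝ (Fin d), (∀ y, f xstar ≤ f y) →
      ∀ x : ℕ → EuclideanSpace ℝ (Fin d),
        (∀ t, x (t + 1) = x t - α (t % 2) • gradient f (x t)) →
        ∀ n : ℕ, ‖x (2 * n) - xstar‖ ≤ R₂ ^ n * ‖x 0 - xstar‖ := by
  intro d f hconv hf hLip xstar hmin x hx n
  exact cyclic_two_step_schedule_rate_general hm.le hmM.le (hm.trans hmM) hS hα₀ hα₁ hR₂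
    (strongConvexOn_iff_convex.2 hconv) hf hLip
    (gradient_eq_zero_of_isLocalMin (.of_forall hmin)) hx n
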